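/- arXiv:2109.01030 — 2 statements merged into one kernel-verified Lean document; each statement's English description precedes it below -/
import Mathlib

section
/- Let f : ℝ → ℝ be integrable with characteristic function φ(u) = ∫_ℝ f(x) e^{iux} dx. Assume φ has a weak derivative φ′ (in the distributional sense) such that |φ|² + |φ′|² is integrable on ℝ. Then f is COS-admissible. -/
/-!
Since `φ` and its weak derivative `φ'` behave like Fourier transforms of `f` and `i x f(x)`, the
hypothesis `φ' ∈ L²` forces `x f(x)` to be square integrable, and this alone gives
`B(L) = O(L⁻²)`.

*From `φ'` to `x f(x)`* (`integrable_mul_sq`). Testing the weak derivative against a Schwartz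
function `ψ = 𝓕⁻ η` and using Fubini on the left-hand side gives
`∫ φ' ψ = i ∫ x f(x) η(-x / 2π) dx`. So the `L²` inverse Fourier transform of `φ'` and a rescaling
of `x f(x)` have the same integral against every `η`, hence agree almost everywhere. As `𝓕⁻ η` is
not compactly supported, the defining identity of the weak derivative is first extended to Schwartz
functions (`weakDeriv_schwartz`).

*From `x f(x)` to `B(L)`* (`sum_tail_coeff_sq_le`). Let `a k` be the `k`-th cosine coefficient of
the tail of `f`, let `K` be a finite set of indices, and put `p = ∑ k ∈ K, a k cos_k`. Then
`S = ∑ k ∈ K, (a k)² = ∫_{|x| > L} f p = ∫_{|x| > L} (x f) (p / x)`. The function `p²` has period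
`4L` and, by orthogonality, integral at most `4 L S` over a period; summing `1 / x²` over the
periods outside `[-L, L]` gives `∫_{|x| > L} p² / x² ≤ C S / L`
(`integrableOn_tail_periodic_div_sq`, `integral_trigSum_sq_le`). A weighted
arithmetic-geometric mean inequality then yields `S ≤ C ‖x f‖² / L`, uniformly in `K`.
-/

open MeasureTheory Real Filter

/-- `cosB f L` is the quantity `B(L)` from the definition of COS-admissibility. -/
noncomputable def cosB (f : ℝ → ℝ) (L : ℝ) : ℝ :=
  ∑' k : ℕ, (1 / L) *
    |∫ x in (Set.Icc (-L) L)ᶜ, f x * Real.cos (k * π * (x + L) / (2 * L))| ^ 2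

/-- `f` is COS-admissible if `B(L) → 0` as `L → ∞`. -/
def COSAdmissible (f : ℝ → ℝ) : Prop :=
  Tendsto (cosB f) atTop (nhds 0)

/-- The characteristic function `φ(u) = ∫_ℝ f(x) e^{iux} dx`. -/
noncomputable def charFun (f : ℝ → ℝ) (u : ℝ) : ℂ :=
  ∫ x : ℝ, (f x : ℂ) * Complex.exp (Complex.I * u * x)

/-- `φ'` is a weak (distributional) derivative of `φ` on `ℝ`:
`φ'` is locally integrable and `∫ φ ψ' = -∫ φ' ψ` for all smooth compactly
supported test functions `ψ`. -/
def IsWeakDeriv (φ φ' : ℝ → ℂ) : Prop :=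
  LocallyIntegrable φ' (volume : Measure ℝ) ∧
    ∀ ψ : ℝ → ℂ, ContDiff ℝ (⊤ : ℕ∞) ψ → HasCompactSupport ψ →
      ∫ u : ℝ, φ u * deriv ψ u = -∫ u : ℝ, φ' u * ψ u

/-! ### Tail cosine coefficients of functions with `x f(x)` square integrable -/

/-- The weight `1 / x ^ 2` makes a periodic function integrable at infinity, with a bound by its
integral over one period: the constant comes from bounding the weight period by period. -/
lemma integrableOn_Ioi_periodic_div_sq {g : ℝ → ℝ} (hg : Continuous g) (hg0 : ∀ x, 0 ≤ g x)
    {L : ℝ} (hL : 0 < L) (hper : Function.Periodic g (4 * L)) :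
    IntegrableOn (fun x => g x / x ^ 2) (Set.Ioi L) ∧
      ∫ x in Set.Ioi L, g x / x ^ 2 ≤
        (∑' n : ℕ, 1 / ((n : ℝ) + 1) ^ 2) / L ^ 2 * ∫ x in L..(L + 4 * L), g x := by
  set I := ∫ x in L..(L + 4 * L), g x with hI
  set K := ∑' n : ℕ, 1 / ((n : ℝ) + 1) ^ 2 with hK
  have hsum : Summable fun n : ℕ => 1 / ((n : ℝ) + 1) ^ 2 := by
    have := (summable_nat_add_iff 1).2 (Real.summable_one_div_nat_pow.2 (one_lt_two))
    simpa using this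
  have hI0 : 0 ≤ I := intervalIntegral.integral_nonneg (by linarith) fun x _ => hg0 x
  set b : ℕ → ℝ := fun n => L + n * (4 * L) with hb
  have hbL : ∀ n, L ≤ b n := fun n => by simp only [hb]; nlinarith [n.cast_nonneg (α := ℝ)]
  have hbmono : ∀ n, b n ≤ b (n + 1) := fun n => by simp only [hb]; push_cast; nlinarith
  have hcont : ContinuousOn (fun x => g x / x ^ 2) (Set.Ici L) := by
    apply hg.continuousOn.div (by fun_prop)
    intro x hx
    have : 0 < x := hL.trans_le hx
    positivity
  have hii : ∀ s t, L ≤ s → s ≤ t → IntervalIntegrable (fun x => g x / x ^ 2) volume s t := by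
    intro s t hs hst
    apply ContinuousOn.intervalIntegrable
    apply hcont.mono
    rw [Set.uIcc_of_le hst]
    exact fun x hx => hs.trans hx.1
  -- on the `n`-th period to the right of `L`, `1 / x ^ 2 ≤ 1 / ((n + 1) ^ 2 * L ^ 2)`
  have hstep : ∀ n : ℕ, ∫ x in b n..b (n + 1), g x / x ^ 2 ≤ 1 / ((n : ℝ) + 1) ^ 2 / L ^ 2 * I := by
    intro n
    have h1 : ∫ x in b n..b (n + 1), g x = I := by
      have := hper.intervalIntegral_add_eq (b n) L
      rw [hI, ← this]
      congr 1
      simp only [hb]; push_cast; ring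
    rw [← h1, ← intervalIntegral.integral_const_mul]
    apply intervalIntegral.integral_mono_on (hbmono n) (hii _ _ (hbL n) (hbmono n))
      ((hg.intervalIntegrable _ _).const_mul _)
    intro x hx
    have hx1 : ((n : ℝ) + 1) * L ≤ x := by
      have := hx.1
      simp only [hb] at this
      nlinarith [n.cast_nonneg (α := ℝ)]
    have h2 : (((n : ℝ) + 1) * L) ^ 2 ≤ x ^ 2 := by
      apply pow_le_pow_left₀ (by positivity) hx1
    rw [div_div, ← mul_pow, div_mul_eq_mul_div, one_mul]
    exact div_le_div_of_nonneg_left (hg0 x) (by positivity) h2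
  have hbound : ∀ n : ℕ, ∫ x in L..b n, g x / x ^ 2 ≤ K / L ^ 2 * I := by
    intro n
    have h0 : b 0 = L := by simp [hb]
    have := intervalIntegral.sum_integral_adjacent_intervals (n := n) (a := b) (μ := volume)
      (f := fun x => g x / x ^ 2) (fun k _ => hii _ _ (hbL k) (hbmono k))
    rw [h0] at this
    rw [← this]
    calc _ ≤ ∑ k ∈ Finset.range n, 1 / ((k : ℝ) + 1) ^ 2 / L ^ 2 * I :=
          Finset.sum_le_sum fun k _ => hstep k
      _ = (∑ k ∈ Finset.range n, 1 / ((k : ℝ) + 1) ^ 2) / L ^ 2 * I := by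
          rw [Finset.sum_div, Finset.sum_mul]
      _ ≤ _ := by
          gcongr
          exact hsum.sum_le_tsum _ (fun _ _ => by positivity)
  have hbt : Tendsto b atTop atTop := by
    apply tendsto_atTop_add_const_left
    exact tendsto_natCast_atTop_atTop.atTop_mul_const (by positivity)
  have hint : IntegrableOn (fun x => g x / x ^ 2) (Set.Ioi L) := by
    apply integrableOn_Ioi_of_intervalIntegral_norm_bounded (K / L ^ 2 * I) L _ hbt
    · filter_upwards with n
      refine le_trans (le_of_eq ?_) (hbound n)
      congr 1
      ext x
      rw [Real.norm_of_nonneg (div_nonneg (hg0 x) (sq_nonneg x))]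
    · intro n
      exact (intervalIntegrable_iff_integrableOn_Ioc_of_le (hbL n)).1 (hii _ _ le_rfl (hbL n))
  exact ⟨hint, le_of_tendsto (intervalIntegral_tendsto_integral_Ioi L hint hbt)
    (Eventually.of_forall hbound)⟩

lemma compl_Icc_eq (L : ℝ) : (Set.Icc (-L) L)ᶜ = Set.Iio (-L) ∪ Set.Ioi L := by
  ext x
  simp only [Set.mem_compl_iff, Set.mem_Icc, not_and_or, not_le, Set.mem_union, Set.mem_Iio,
    Set.mem_Ioi]

/-- Two-sided version of `integrableOn_Ioi_periodic_div_sq`. -/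
lemma integrableOn_tail_periodic_div_sq {g : ℝ → ℝ} (hg : Continuous g) (hg0 : ∀ x, 0 ≤ g x)
    {L : ℝ} (hL : 0 < L) (hper : Function.Periodic g (4 * L)) :
    IntegrableOn (fun x => g x / x ^ 2) (Set.Icc (-L) L)ᶜ ∧
      ∫ x in (Set.Icc (-L) L)ᶜ, g x / x ^ 2 ≤
        2 * (∑' n : ℕ, 1 / ((n : ℝ) + 1) ^ 2) / L ^ 2 * ∫ x in (-L)..(-L + 4 * L), g x := by
  obtain ⟨hp1, hp2⟩ := integrableOn_Ioi_periodic_div_sq hg hg0 hL hper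
  have hper' : Function.Periodic (fun x => g (-x)) (4 * L) := by
    intro x
    have := hper (-(x + 4 * L))
    simp only at this ⊢
    rw [← this]; congr 1; ring
  obtain ⟨hn1, hn2⟩ := integrableOn_Ioi_periodic_div_sq (g := fun x => g (-x))
    (hg.comp continuous_neg) (fun x => hg0 _) hL hper'
  have e1 : ∫ x in L..(L + 4 * L), g x = ∫ x in (-L)..(-L + 4 * L), g x :=
    hper.intervalIntegral_add_eq _ _
  have e2 : ∫ x in L..(L + 4 * L), g (-x) = ∫ x in (-L)..(-L + 4 * L), g x := by
    rw [intervalIntegral.integral_comp_neg, ← hper.intervalIntegral_add_eq (-(L + 4 * L)) (-L)]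
    congr 1; ring
  have hn1' : IntegrableOn (fun x => g x / x ^ 2) (Set.Iio (-L)) := by
    have := IntegrableOn.comp_neg_Iio (c := -L) (f := fun x => g (-x) / x ^ 2) (by simpa using hn1)
    simpa using this
  have e3 : ∫ x in Set.Iio (-L), g x / x ^ 2 = ∫ x in Set.Ioi L, g (-x) / x ^ 2 := by
    have := integral_comp_neg_Ioi L (fun x => g x / x ^ 2)
    simp only [even_two.neg_pow] at this
    rw [this, integral_Iic_eq_integral_Iio]
  rw [compl_Icc_eq]
  refine ⟨hn1'.union hp1, ?_⟩
  rw [setIntegral_union _ measurableSet_Ioi hn1' hp1, e3]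
  · rw [e1] at hp2
    rw [e2] at hn2
    calc _ ≤ _ := add_le_add hn2 hp2
      _ = _ := by ring
  · rw [Set.disjoint_left]
    intro x hx hx'
    simp only [Set.mem_Iio, Set.mem_Ioi] at hx hx'
    linarith

lemma integral_cos_int_period {L : ℝ} (hL : 0 < L) (m : ℤ) (hm : m ≠ 0) :
    ∫ x in (-L)..(-L + 4 * L), Real.cos (m * π * (x + L) / (2 * L)) = 0 := by
  have hm' : (m : ℝ) ≠ 0 := by exact_mod_cast hm
  have hc : (m : ℝ) * π / (2 * L) ≠ 0 := by positivity
  have : ∀ x, Real.cos (m * π * (x + L) / (2 * L)) =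
      Real.cos ((m * π / (2 * L)) * x + m * π / 2) := by
    intro x; congr 1; field_simp
  simp_rw [this]
  rw [intervalIntegral.integral_comp_mul_add (fun y => Real.cos y) hc, integral_cos]
  have e1 : (m * π / (2 * L)) * (-L + 4 * L) + m * π / 2 = m * (2 * π) := by
    field_simp; ring
  have e2 : (m * π / (2 * L)) * (-L) + m * π / 2 = 0 := by
    field_simp; ring
  rw [e1, e2, Real.sin_zero]
  have : Real.sin (m * (2 * π)) = 0 := by
    have := Real.sin_int_mul_pi (m * 2); push_cast at this; rw [← this]; ring_nf
  simp [this]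

lemma integral_cos_mul_cos {L : ℝ} (hL : 0 < L) {k l : ℕ} (hkl : k ≠ l) :
    ∫ x in (-L)..(-L + 4 * L), Real.cos (k * π * (x + L) / (2 * L)) *
      Real.cos (l * π * (x + L) / (2 * L)) = 0 := by
  have h : ∀ x : ℝ, Real.cos (k * π * (x + L) / (2 * L)) * Real.cos (l * π * (x + L) / (2 * L)) =
      (1 / 2) * (Real.cos (((k - l : ℤ) : ℝ) * π * (x + L) / (2 * L)) +
        Real.cos (((k + l : ℤ) : ℝ) * π * (x + L) / (2 * L))) := by
    intro x
    have e1 : ((k - l : ℤ) : ℝ) * π * (x + L) / (2 * L) =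
      k * π * (x + L) / (2 * L) - l * π * (x + L) / (2 * L) := by push_cast; ring
    have e2 : ((k + l : ℤ) : ℝ) * π * (x + L) / (2 * L) =
      k * π * (x + L) / (2 * L) + l * π * (x + L) / (2 * L) := by push_cast; ring
    rw [e1, e2, Real.cos_sub, Real.cos_add]; ring
  simp_rw [h]
  rw [intervalIntegral.integral_const_mul, intervalIntegral.integral_add,
    integral_cos_int_period hL _ (by omega), integral_cos_int_period hL _ (by omega)]
  · simp
  all_goals exact (by fun_prop : Continuous _).intervalIntegrable _ _

/-- Parseval over one period, as an inequality because the constant mode has twice the norm of the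
others. -/
lemma integral_trigSum_sq_le {L : ℝ} (hL : 0 < L) (K : Finset ℕ) (a : ℕ → ℝ) :
    ∫ x in (-L)..(-L + 4 * L), (∑ k ∈ K, a k * Real.cos (k * π * (x + L) / (2 * L))) ^ 2 ≤
      4 * L * ∑ k ∈ K, a k ^ 2 := by
  have h : ∀ x : ℝ, (∑ k ∈ K, a k * Real.cos (k * π * (x + L) / (2 * L))) ^ 2 =
      ∑ k ∈ K, ∑ l ∈ K, a k * a l * (Real.cos (k * π * (x + L) / (2 * L)) *
        Real.cos (l * π * (x + L) / (2 * L))) := by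
    intro x
    rw [sq, Finset.sum_mul_sum]
    refine Finset.sum_congr rfl fun k _ => Finset.sum_congr rfl fun l _ => by ring
  simp_rw [h]
  rw [intervalIntegral.integral_finsetSum
    (fun k _ => (by fun_prop : Continuous _).intervalIntegrable _ _), Finset.mul_sum]
  refine Finset.sum_le_sum fun k hk => ?_
  rw [intervalIntegral.integral_finsetSum
    (fun k _ => (by fun_prop : Continuous _).intervalIntegrable _ _),
    Finset.sum_eq_single_of_mem k hk]
  · rw [intervalIntegral.integral_const_mul]
    have : ∫ x in (-L)..(-L + 4 * L), Real.cos (k * π * (x + L) / (2 * L)) *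
        Real.cos (k * π * (x + L) / (2 * L)) ≤ ∫ x in (-L)..(-L + 4 * L), (1 : ℝ) := by
      apply intervalIntegral.integral_mono_on (by linarith)
        ((by fun_prop : Continuous _).intervalIntegrable _ _)
        (continuous_const.intervalIntegrable _ _)
      intro x _
      nlinarith [Real.cos_sq_le_one (k * π * (x + L) / (2 * L))]
    rw [intervalIntegral.integral_const, smul_eq_mul, mul_one] at this
    nlinarith [mul_self_nonneg (a k)]
  · intro l _ hlk
    rw [intervalIntegral.integral_const_mul, integral_cos_mul_cos hL hlk.symm, mul_zero]

/-- Finite form of the key estimate `B(L) = O(L⁻²)`, obtained by testing the tail of `f` against the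
trigonometric polynomial whose coefficients are the tail coefficients `a k` themselves. -/
lemma sum_tail_coeff_sq_le {f : ℝ → ℝ} (hf : Integrable f)
    (hxf : Integrable fun x => (x * f x) ^ 2) {L : ℝ} (hL : 0 < L) (K : Finset ℕ) :
    ∑ k ∈ K, (∫ x in (Set.Icc (-L) L)ᶜ, f x * Real.cos (k * π * (x + L) / (2 * L))) ^ 2 ≤
      8 * (∑' n : ℕ, 1 / ((n : ℝ) + 1) ^ 2) * (∫ x, (x * f x) ^ 2) / L := by
  set a : ℕ → ℝ := fun k => ∫ x in (Set.Icc (-L) L)ᶜ, f x * Real.cos (k * π * (x + L) / (2 * L))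
    with ha
  set Z := ∑' n : ℕ, 1 / ((n : ℝ) + 1) ^ 2 with hZ
  set M := ∫ x, (x * f x) ^ 2 with hM
  set S := ∑ k ∈ K, a k ^ 2 with hS
  have hZ1 : 0 < Z := by
    have hsum : Summable fun n : ℕ => 1 / ((n : ℝ) + 1) ^ 2 := by
      have := (summable_nat_add_iff 1).2 (Real.summable_one_div_nat_pow.2 (one_lt_two))
      simpa using this
    exact hsum.tsum_pos (fun n => by positivity) 0 (by norm_num)
  set p : ℝ → ℝ := fun x => ∑ k ∈ K, a k * Real.cos (k * π * (x + L) / (2 * L)) with hp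
  have hpc : Continuous p := by fun_prop
  have hpper : Function.Periodic (fun x => p x ^ 2) (4 * L) := by
    intro x
    simp only [hp]
    congr 1
    refine Finset.sum_congr rfl fun k _ => ?_
    rw [show (k : ℝ) * π * (x + 4 * L + L) / (2 * L) = k * π * (x + L) / (2 * L) + k * (2 * π) by
      field_simp; ring, Real.cos_add_nat_mul_two_pi]
  obtain ⟨hint, hle⟩ := integrableOn_tail_periodic_div_sq
    (g := fun x => p x ^ 2) (hpc.pow 2) (fun x => sq_nonneg _) hL hpper
  have hD : ∫ x in (Set.Icc (-L) L)ᶜ, p x ^ 2 / x ^ 2 ≤ 8 * Z / L * S := by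
    refine hle.trans ?_
    calc _ ≤ 2 * Z / L ^ 2 * (4 * L * S) := by
          apply mul_le_mul_of_nonneg_left (integral_trigSum_sq_le hL K a); positivity
      _ = _ := by field_simp; ring
  have hfc : ∀ k : ℕ, Integrable fun x => f x * Real.cos (k * π * (x + L) / (2 * L)) := by
    intro k
    refine hf.mul_bdd (c := 1) (by fun_prop) (Eventually.of_forall fun x => ?_)
    rw [Real.norm_eq_abs]; exact Real.abs_cos_le_one _
  have hfp : ∀ x, f x * p x = ∑ k ∈ K, a k * (f x * Real.cos (k * π * (x + L) / (2 * L))) := by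
    intro x
    simp only [hp, Finset.mul_sum]
    exact Finset.sum_congr rfl fun k _ => by ring
  have hSeq : S = ∫ x in (Set.Icc (-L) L)ᶜ, f x * p x := by
    simp_rw [hfp]
    rw [integral_finsetSum _ (fun k _ => ((hfc k).const_mul _).integrableOn)]
    simp_rw [integral_const_mul]
    exact Finset.sum_congr rfl fun k _ => by rw [sq]
  have hfpi : Integrable fun x => f x * p x := by
    simp_rw [hfp]
    exact integrable_finsetSum _ fun k _ => (hfc k).const_mul _
  -- the weight `c` in the inequality `2 u v ≤ c u ^ 2 + v ^ 2 / c` lets `S / 2` be absorbed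
  set c : ℝ := 8 * Z / L with hc
  have hc0 : 0 < c := by positivity
  have hMt : ∫ x in (Set.Icc (-L) L)ᶜ, (x * f x) ^ 2 ≤ M :=
    setIntegral_le_integral hxf (Eventually.of_forall fun x => sq_nonneg _)
  have key : S ≤ c / 2 * M + S / 2 := by
    calc S = ∫ x in (Set.Icc (-L) L)ᶜ, f x * p x := hSeq
      _ ≤ ∫ x in (Set.Icc (-L) L)ᶜ, (c / 2 * (x * f x) ^ 2 + 1 / (2 * c) * (p x ^ 2 / x ^ 2)) := by
        refine setIntegral_mono_on hfpi.integrableOn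
          ((hxf.integrableOn.const_mul _).add (hint.const_mul _)) measurableSet_Icc.compl ?_
        intro x hx
        have hx0 : x ≠ 0 := by
          rintro rfl
          exact hx ⟨by linarith, hL.le⟩
        have : c / 2 * (x * f x) ^ 2 + 1 / (2 * c) * (p x ^ 2 / x ^ 2) - f x * p x =
            (c * (x * f x) - p x / x) ^ 2 / (2 * c) := by
          field_simp; ring
        have h2 : 0 ≤ (c * (x * f x) - p x / x) ^ 2 / (2 * c) := by positivity
        linarith
      _ = c / 2 * (∫ x in (Set.Icc (-L) L)ᶜ, (x * f x) ^ 2) +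
          1 / (2 * c) * ∫ x in (Set.Icc (-L) L)ᶜ, p x ^ 2 / x ^ 2 := by
        rw [integral_add (hxf.integrableOn.const_mul _) (hint.const_mul _), integral_const_mul,
          integral_const_mul]
      _ ≤ c / 2 * M + 1 / (2 * c) * (c * S) := by gcongr
      _ = _ := by field_simp
  have : S ≤ c * M := by linarith
  calc S ≤ c * M := this
    _ = _ := by rw [hc]; ring

/-- It suffices that `x f(x)` be square integrable. -/
lemma cosAdmissible_of_integrable_sq {f : ℝ → ℝ} (hf : Integrable f)
    (hxf : Integrable fun x => (x * f x) ^ 2) : COSAdmissible f := by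
  set C := 8 * (∑' n : ℕ, 1 / ((n : ℝ) + 1) ^ 2) * (∫ x, (x * f x) ^ 2) with hC
  have h0 : Tendsto (fun L : ℝ => C * (L ^ 2)⁻¹) atTop (nhds 0) := by
    have : Tendsto (fun L : ℝ => (L ^ 2)⁻¹) atTop (nhds 0) :=
      (tendsto_pow_atTop two_ne_zero).inv_tendsto_atTop
    simpa using this.const_mul C
  refine tendsto_of_tendsto_of_tendsto_of_le_of_le' tendsto_const_nhds h0 ?_ ?_
  · filter_upwards [eventually_gt_atTop 0] with L hL
    exact tsum_nonneg fun k => by positivity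
  · filter_upwards [eventually_gt_atTop 0] with L hL
    refine Real.tsum_le_of_sum_le (fun k => by positivity) fun K => ?_
    rw [← Finset.mul_sum]
    simp_rw [sq_abs]
    calc _ ≤ 1 / L * (C / L) := by
          gcongr
          exact sum_tail_coeff_sq_le hf hxf hL K
      _ = _ := by field_simp

/-! ### Square integrability of `x f(x)` from the weak derivative -/

open scoped FourierTransform SchwartzMap ContDiff

lemma norm_charFun_le (f : ℝ → ℝ) (u : ℝ) : ‖charFun f u‖ ≤ ∫ x, ‖f x‖ := by
  refine (norm_integral_le_integral_norm _).trans (le_of_eq ?_)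
  congr 1; ext x
  rw [norm_mul, show Complex.I * u * x = ((u * x : ℝ) : ℂ) * Complex.I by push_cast; ring,
    Complex.norm_exp_ofReal_mul_I, mul_one, Complex.norm_real]

lemma continuous_charFun {f : ℝ → ℝ} (hf : Integrable f) : Continuous (charFun f) := by
  refine continuous_of_dominated (bound := fun x => ‖f x‖) ?_ ?_ hf.norm ?_
  · intro u
    exact (hf.ofReal (𝕜 := ℂ)).aestronglyMeasurable.mul
      (by fun_prop : Continuous _).aestronglyMeasurable
  · intro u
    refine Eventually.of_forall fun x => ?_
    rw [norm_mul, show Complex.I * u * x = ((u * x : ℝ) : ℂ) * Complex.I by push_cast; ring,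
      Complex.norm_exp_ofReal_mul_I, mul_one, Complex.norm_real]
  · refine Eventually.of_forall fun x => ?_
    fun_prop

/-- The defining identity of the weak derivative extends from compactly supported test functions to
Schwartz functions, by cutting off: both sides pass to the limit since `φ` is bounded and `φ'` is
square integrable. -/
lemma weakDeriv_schwartz {φ φ' : ℝ → ℂ} (hweak : IsWeakDeriv φ φ') (hφ : Continuous φ)
    {C : ℝ} (hC : ∀ u, ‖φ u‖ ≤ C) (hφ' : MemLp φ' 2) (ψ : 𝓢(ℝ, ℂ)) :
    ∫ u, φ u * deriv ψ u = -∫ u, φ' u * ψ u := by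
  let χ : ContDiffBump (0 : ℝ) := ⟨1, 2, one_pos, one_lt_two⟩
  let r : ℕ → ℝ := fun n => 1 / ((n : ℝ) + 1)
  have hr0 : ∀ n, 0 < r n := fun n => by positivity
  have hr1 : ∀ n, r n ≤ 1 := fun n => by
    simp only [r]
    rw [div_le_one (by positivity)]
    linarith [n.cast_nonneg (α := ℝ)]
  have hrt : Tendsto r atTop (nhds 0) := tendsto_one_div_add_atTop_nhds_zero_nat
  let X : ℕ → ℝ → ℂ := fun n u => ((χ (r n * u) : ℝ) : ℂ)
  have hχs : ContDiff ℝ (⊤ : ℕ∞) χ := χ.contDiff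
  have hXs : ∀ n, ContDiff ℝ (⊤ : ℕ∞) (X n) := fun n =>
    Complex.ofRealCLM.contDiff.comp (hχs.comp (contDiff_const.mul contDiff_id))
  have hXc : ∀ n, HasCompactSupport (X n) := by
    intro n
    have h1 : HasCompactSupport (fun u => χ (r n * u)) :=
      χ.hasCompactSupport.comp_homeomorph (Homeomorph.mulLeft₀ (r n) (hr0 n).ne')
    exact h1.comp_left (g := fun t : ℝ => (t : ℂ)) (by simp)
  have hXle : ∀ n u, ‖X n u‖ ≤ 1 := by
    intro n u
    simp only [X, Complex.norm_real, Real.norm_of_nonneg χ.nonneg]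
    exact χ.le_one
  have hX1 : ∀ u, ∀ᶠ n in atTop, X n u = 1 := by
    intro u
    have h1 : Tendsto (fun n => r n * u) atTop (nhds 0) := by simpa using hrt.mul_const u
    have h2 : ∀ᶠ n in atTop, r n * u ∈ Metric.closedBall (0 : ℝ) 1 :=
      h1.eventually (Metric.closedBall_mem_nhds _ one_pos)
    filter_upwards [h2] with n hn
    simp [X, χ.one_of_mem_closedBall hn]
  obtain ⟨D, hD⟩ : ∃ D, ∀ t, ‖deriv χ t‖ ≤ D :=
    (χ.hasCompactSupport.deriv).exists_bound_of_continuous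
      (hχs.continuous_deriv (by simp))
  have hD0 : 0 ≤ D := (norm_nonneg _).trans (hD 0)
  have hXd : ∀ n u, HasDerivAt (X n) ((r n * deriv χ (r n * u) : ℝ) : ℂ) u := by
    intro n u
    have h1 : HasDerivAt χ (deriv χ (r n * u)) (r n * u) :=
      (hχs.differentiable (by simp) _).hasDerivAt
    have h2 := h1.comp u ((hasDerivAt_id u).const_mul (r n))
    have h3 := h2.ofReal_comp
    refine h3.congr_deriv ?_
    push_cast; ring
  have hψd : ∀ u, HasDerivAt ψ (deriv ψ u) u := fun u => ψ.differentiableAt.hasDerivAt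
  have hPd : ∀ n u, deriv (fun u => X n u * ψ u) u =
      ((r n * deriv χ (r n * u) : ℝ) : ℂ) * ψ u + X n u * deriv ψ u := fun n u =>
    ((hXd n u).mul (hψd u)).deriv
  have hψi : Integrable ψ := ψ.integrable
  have hψdi : Integrable (deriv ψ) := (SchwartzMap.derivCLM ℂ ℂ ψ).integrable
  have hψ2 : MemLp ψ 2 := ψ.memLp 2
  have hstep : ∀ n, ∫ u, φ u * deriv (fun u => X n u * ψ u) u = -∫ u, φ' u * (X n u * ψ u) :=
    fun n => hweak.2 _ ((hXs n).mul ψ.smooth') ((hXc n).mul_right)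
  have hr_lim : Tendsto (fun n => ∫ u, φ' u * (X n u * ψ u)) atTop (nhds (∫ u, φ' u * ψ u)) := by
    refine tendsto_integral_of_dominated_convergence (fun u => ‖φ' u * ψ u‖) ?_
      (hφ'.integrable_mul hψ2).norm ?_ ?_
    · intro n
      exact hφ'.1.mul ((hXs n).continuous.mul ψ.continuous).aestronglyMeasurable
    · intro n
      refine Eventually.of_forall fun u => ?_
      rw [norm_mul, norm_mul, norm_mul]
      gcongr
      exact mul_le_of_le_one_left (norm_nonneg _) (hXle n u)
    · refine Eventually.of_forall fun u => ?_
      apply tendsto_const_nhds.congr'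
      filter_upwards [hX1 u] with n hn
      rw [hn, one_mul]
  have hl_lim : Tendsto (fun n => ∫ u, φ u * deriv (fun u => X n u * ψ u) u) atTop
      (nhds (∫ u, φ u * deriv ψ u)) := by
    simp_rw [hPd]
    refine tendsto_integral_of_dominated_convergence
      (fun u => C * (D * ‖ψ u‖ + ‖deriv ψ u‖)) ?_
      (((hψi.norm.const_mul D).add hψdi.norm).const_mul C) ?_ ?_
    · intro n
      have hd : Continuous (deriv χ) := hχs.continuous_deriv (by simp)
      have h1 := (hXs n).continuous
      have h2 := (SchwartzMap.derivCLM ℂ ℂ ψ).continuous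
      have h3 : Continuous (deriv ψ) := h2
      have h4 := ψ.continuous
      exact (by fun_prop : Continuous _).aestronglyMeasurable
    · intro n
      refine Eventually.of_forall fun u => ?_
      rw [norm_mul]
      have hC0 : 0 ≤ C := (norm_nonneg _).trans (hC u)
      refine mul_le_mul (hC u) ((norm_add_le _ _).trans ?_) (norm_nonneg _) hC0
      rw [norm_mul, norm_mul, Complex.norm_real, norm_mul, Real.norm_of_nonneg (hr0 n).le]
      refine add_le_add ?_ (mul_le_of_le_one_left (norm_nonneg _) (hXle n u))
      gcongr
      calc r n * ‖deriv χ (r n * u)‖ ≤ 1 * D :=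
            mul_le_mul (hr1 n) (hD _) (norm_nonneg _) zero_le_one
        _ = D := one_mul D
    · refine Eventually.of_forall fun u => ?_
      refine Tendsto.const_mul _ ?_
      have h1 : Tendsto (fun n => r n * deriv χ (r n * u)) atTop (nhds 0) := by
        refine squeeze_zero_norm (a := fun n => r n * D) ?_ (by simpa using hrt.mul_const D)
        intro n
        rw [norm_mul, Real.norm_of_nonneg (hr0 n).le]
        exact mul_le_mul_of_nonneg_left (hD _) (hr0 n).le
      have h2 : Tendsto (fun n => X n u) atTop (nhds 1) := by
        apply tendsto_const_nhds.congr'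
        filter_upwards [hX1 u] with n hn
        rw [hn]
      have h3 := (((Complex.continuous_ofReal.tendsto 0).comp h1).mul_const (ψ u)).add
        (h2.mul_const (deriv ψ u))
      simpa using h3
  refine tendsto_nhds_unique hl_lim ?_
  simp_rw [hstep]
  exact hr_lim.neg

/-- Multiplication formula: pairing `φ` with `g` is pairing `f` with the Fourier transform of `g`,
up to the rescaling `ξ = -x / (2π)` between the two normalisations. -/
lemma integral_charFun_mul {f : ℝ → ℝ} (hf : Integrable f) {g : ℝ → ℂ} (hg : Integrable g) :
    ∫ u, charFun f u * g u = ∫ x : ℝ, (f x : ℂ) * 𝓕 g (-x / (2 * π)) := by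
  have hprod : Integrable (Function.uncurry fun u x : ℝ =>
      (f x : ℂ) * Complex.exp (Complex.I * u * x) * g u) (volume.prod volume) := by
    have h1 := hg.mul_prod (hf.ofReal (𝕜 := ℂ))
    have h2 : Integrable (fun z : ℝ × ℝ => Complex.exp (Complex.I * z.1 * z.2) *
        (g z.1 * (f z.2 : ℂ))) (volume.prod volume) := by
      refine h1.bdd_mul (c := 1) (by fun_prop : Continuous _).aestronglyMeasurable
        (Eventually.of_forall fun z => ?_)
      rw [show Complex.I * z.1 * z.2 = ((z.1 * z.2 : ℝ) : ℂ) * Complex.I by push_cast; ring,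
        Complex.norm_exp_ofReal_mul_I]
    refine h2.congr (Eventually.of_forall fun z => ?_)
    simp only [Function.uncurry]; ring
  simp_rw [_root_.charFun, ← integral_mul_const]
  rw [integral_integral_swap hprod]
  congr 1; ext x
  rw [Real.fourier_eq', ← integral_const_mul]
  congr 1; ext u
  rw [smul_eq_mul, mul_assoc]
  congr 3
  have hpi : (π : ℂ) ≠ 0 := by exact_mod_cast Real.pi_ne_zero
  simp only [RCLike.inner_apply, conj_trivial]
  push_cast
  field_simp

/-- If the characteristic function lies in the Sobolev space `H¹`, then `x f(x)` is square
integrable: it is, up to scaling, the `L²` inverse Fourier transform of `φ'`. -/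
lemma integrable_mul_sq {f : ℝ → ℝ} (hf : Integrable f) {φ' : ℝ → ℂ}
    (hweak : IsWeakDeriv (charFun f) φ') (hφ' : MemLp φ' 2) :
    Integrable fun x => (x * f x) ^ 2 := by
  set G : Lp ℂ 2 (volume : Measure ℝ) := hφ'.toLp φ' with hG
  set H : Lp ℂ 2 (volume : Measure ℝ) := 𝓕⁻ G with hH
  have hpi : (π : ℂ) ≠ 0 := by exact_mod_cast Real.pi_ne_zero
  have hpi2 : (-(2 * π)) ≠ 0 := by have := Real.pi_pos; linarith
  set F : ℝ → ℂ := fun y => (-(4 * π ^ 2) * Complex.I * y) * (f (-(2 * π) * y) : ℂ) with hF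
  have hid : ∀ η : 𝓢(ℝ, ℂ), ∫ y, η y • H y = ∫ y, η y • F y := by
    intro η
    set θ : 𝓢(ℝ, ℂ) := 𝓕⁻ η with hθ
    have h1 : ∫ y, η y • H y = ∫ u, φ' u * θ u := by
      rw [← Lp.toTemperedDistribution_apply, hH, ← Lp.fourierInv_toTemperedDistribution_eq,
        TemperedDistribution.fourierInv_apply, Lp.toTemperedDistribution_apply]
      refine integral_congr_ae ?_
      filter_upwards [hφ'.coeFn_toLp] with u hu
      rw [hG, hu, smul_eq_mul, mul_comm]
    have hdi : Integrable (deriv θ) := (SchwartzMap.derivCLM ℂ ℂ θ).integrable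
    have h2 := weakDeriv_schwartz hweak (continuous_charFun hf) (norm_charFun_le f) hφ' θ
    rw [integral_charFun_mul hf hdi,
      Real.fourier_deriv θ.integrable θ.differentiable hdi] at h2
    have h3 : 𝓕 (θ : ℝ → ℂ) = η := by
      rw [← SchwartzMap.fourier_coe, hθ, FourierTransform.fourier_fourierInv_eq]
    rw [h3] at h2
    rw [h1, ← neg_eq_iff_eq_neg.mpr h2]
    set k : ℝ → ℂ := fun x => -((f x : ℂ) *
      ((2 * π * Complex.I * ((-x / (2 * π) : ℝ) : ℂ)) • η (-x / (2 * π)))) with hk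
    have h4 := Measure.integral_comp_mul_left k (-(2 * π))
    have h5 : ∀ y, η y • F y = (2 * π : ℂ) * k (-(2 * π) * y) := by
      intro y
      have : -(-(2 * π) * y) / (2 * π) = y := by field_simp
      simp only [hk, hF, this, smul_eq_mul]
      ring
    simp_rw [h5]
    rw [integral_const_mul, h4, ← integral_neg, abs_inv, abs_neg, abs_of_pos (by positivity),
      Complex.real_smul, ← mul_assoc,
      show (2 * π : ℂ) * (((2 * π)⁻¹ : ℝ) : ℂ) = 1 by push_cast; field_simp, one_mul]
  have hfc : Integrable fun y => (f (-(2 * π) * y) : ℂ) :=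
    (hf.comp_mul_left' hpi2).ofReal
  have hFloc : LocallyIntegrable F := by
    have := hfc.locallyIntegrable.continuous_smul
      (g := fun y : ℝ => (-(4 * π ^ 2) * Complex.I * y : ℂ)) (by fun_prop)
    simpa [hF, smul_eq_mul] using this
  have hHloc : LocallyIntegrable H :=
    (Lp.memLp H).locallyIntegrable (by norm_num)
  have hae : ∀ᵐ y, (H : ℝ → ℂ) y = F y := by
    refine ae_eq_of_integral_contDiff_smul_eq hHloc hFloc fun g hg hgc => ?_
    have hgc' : HasCompactSupport fun x => (g x : ℂ) :=
      hgc.comp_left (g := fun t : ℝ => (t : ℂ)) (by simp)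
    have := hid (hgc'.toSchwartzMap (Complex.ofRealCLM.contDiff.comp hg))
    simp only [Complex.real_smul]
    exact this
  have hFL : MemLp F 2 := (memLp_congr_ae hae).1 (Lp.memLp H)
  have hF2 : Integrable fun y => ‖F y‖ ^ 2 := by
    simpa using (memLp_two_iff_integrable_sq_norm hFL.1).1 hFL
  refine (integrable_comp_mul_left_iff (fun x => (x * f x) ^ 2) hpi2).1 ?_
  have h6 : ∀ y, (-(2 * π) * y * f (-(2 * π) * y)) ^ 2 = 1 / (4 * π ^ 2) * ‖F y‖ ^ 2 := by
    intro y
    simp only [hF, norm_mul, norm_neg, norm_pow, Complex.norm_I, Complex.norm_real, mul_pow,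
      Real.norm_eq_abs, sq_abs]
    norm_num
    have : π ≠ 0 := Real.pi_ne_zero
    field_simp
    ring
  simp_rw [h6]
  exact hF2.const_mul _

theorem stmt_2 (f : ℝ → ℝ) (hf : Integrable f) (φ' : ℝ → ℂ)
    (hweak : IsWeakDeriv (charFun f) φ')
    (hL1 : Integrable (fun u => ‖charFun f u‖ ^ 2 + ‖φ' u‖ ^ 2)) :
    COSAdmissible f := by
  have hmeas : AEStronglyMeasurable φ' volume := hweak.1.aestronglyMeasurable
  have hφ' : MemLp φ' 2 := by
    rw [memLp_two_iff_integrable_sq_norm hmeas]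
    refine hL1.mono' (hmeas.norm.pow 2) (Eventually.of_forall fun u => ?_)
    rw [Real.norm_of_nonneg (by positivity)]
    nlinarith [sq_nonneg ‖charFun f u‖]
  exact cosAdmissible_of_integrable_sq hf (integrable_mul_sq hf hweak hφ')
end

section
/- For parameters α ∈ (1/2, 2], c > 0 and μ ∈ ℝ, let f : ℝ → ℝ be a probability density whose characteristic function satisfies φ(u) = ∫_ℝ f(x) e^{iux} dx = exp(iμu − |cu|^α) for all u ∈ ℝ (the symmetric stable density). Then f is COS-admissible. -/
open MeasureTheory Real Filter

/-!
The proof bounds `B(L)` by `C (∫ x² f(x)² dx) / L²`, and so has two independent ingredients.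

*The function `x f(x)` is square integrable.* With `w ↦ e^{-2πiwx}` as the Fourier kernel,
`𝓕 f (w) = e^{-2πiμw} e^{-a|w|^α}` where `a = (2πc)^α`. Away from `w = 0` it is differentiable, and its
derivative `D` is dominated by a multiple of `(|w|^(α-1) + 1) e^{-a|w|^α}`, which lies in `L²` exactly
because `2 (α - 1) > -1`. As `𝓕 f` is continuous at `0`, `D` is also its weak derivative
(`integral_deriv_mul_schwartz`). Testing against Schwartz functions then identifies `2πi x f(x)` with
minus the `L²` inverse Fourier transform of `D` (`memLp_mul_id`).

*A weighted Bessel inequality.* Let `a_k` be the cosine integrals of `f` over `|x| > L`, and let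
`T = ∑_{k<N} a_k cos(kπ(x+L)/(2L))` and `S = ∑_{k<N} a_k²`, so that `S = ∫_{|x|>L} f T`. By
Cauchy–Schwarz, `S² ≤ (∫ x² f²) (∫_{|x|>L} T²/x²)`. Since `T` is `4L`-periodic with
`∫ T² ≤ 4 L S` over a period, summing over the periods bounds the last factor by a constant times
`S / L`, and hence `S` by a constant times `(∫ x² f²) / L` (`sum_sq_le`).
-/

open scoped FourierTransform SchwartzMap ContDiff

/-! ### Square integrability of `x f(x)` -/

/-- A bounded continuous function that is differentiable off `0` with derivative in `L²` has that
derivative as its weak derivative: the boundary terms at `0` cancel by continuity. -/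
lemma integral_deriv_mul_schwartz {Φ D : ℝ → ℂ} {M : ℝ} (hΦ : Continuous Φ) (hM : ∀ w, ‖Φ w‖ ≤ M)
    (hD : ∀ w ≠ 0, HasDerivAt Φ (D w) w) (hD2 : MemLp D 2) (η : 𝓢(ℝ, ℂ)) :
    ∫ w, deriv η w * Φ w = - ∫ w, η w * D w := by
  have i1 : Integrable (fun w => deriv η w * Φ w) := by
    have := (SchwartzMap.derivCLM ℂ ℂ η).integrable (μ := volume)
    refine (Integrable.mul_bdd (c := M) (f := fun w => deriv η w) ?_ hΦ.aestronglyMeasurable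
      (Eventually.of_forall hM))
    exact this
  have i2 : Integrable (fun w => η w * D w) := (η.memLp 2).integrable_mul hD2
  have hlim : Tendsto (fun w => η w * Φ w) (cocompact ℝ) (nhds 0) := by
    have h0 : Tendsto η (cocompact ℝ) (nhds 0) := η.tendsto_cocompact
    refine squeeze_zero_norm (a := fun w => ‖η w‖ * M) (fun w => ?_) (by simpa using h0.norm.mul_const M)
    rw [norm_mul]; gcongr; exact hM w
  rw [cocompact_eq_atBot_atTop, tendsto_sup] at hlim
  have hder : ∀ w ≠ 0, HasDerivAt (fun w => η w * Φ w) (deriv η w * Φ w + η w * D w) w :=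
    fun w hw => (η.differentiableAt.hasDerivAt).mul (hD w hw)
  have hc : Continuous (fun w => η w * Φ w) := η.continuous.mul hΦ
  have e1 := integral_Ioi_of_hasDerivAt_of_tendsto (a := 0) hc.continuousWithinAt
    (fun x hx => hder x (ne_of_gt hx)) (i1.add i2).integrableOn hlim.2
  have e2 := integral_Iic_of_hasDerivAt_of_tendsto (a := 0) hc.continuousWithinAt
    (fun x hx => hder x (ne_of_lt hx)) (i1.add i2).integrableOn hlim.1
  have e3 := intervalIntegral.integral_Iic_add_Ioi (b := 0) (i1.add i2).integrableOn (i1.add i2).integrableOn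
  simp only [Pi.add_apply] at e3
  rw [e1, e2, integral_add i1 i2] at e3
  linear_combination -e3

/-- If the Fourier transform of `f` has an `L²` derivative off `0`, then `x f(x)` is in `L²`. -/
lemma memLp_mul_id {f : ℝ → ℂ} (hf : Integrable f) {D : ℝ → ℂ}
    (hD : ∀ w ≠ 0, HasDerivAt (𝓕 f) (D w) w) (hD2 : MemLp D 2) :
    MemLp (fun x : ℝ => (x : ℂ) * f x) 2 := by
  have hΦ : Continuous (𝓕 f) := VectorFourier.fourierIntegral_continuous
    Real.continuous_fourierChar (innerSL ℝ).continuous₂ hf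
  have hM : ∀ w, ‖𝓕 f w‖ ≤ ∫ x, ‖f x‖ := fun w =>
    VectorFourier.norm_fourierIntegral_le_integral_norm _ _ _ _ _
  set G : Lp ℂ 2 (volume : Measure ℝ) := 𝓕⁻ (hD2.toLp D) with hG
  -- `2πi x f(x)` and `-G` agree as tempered distributions: write a test function `g` as `𝓕 η`.
  have key : ∀ g : 𝓢(ℝ, ℂ), ∫ x, g x * ((2 * π * Complex.I * x) * f x) = - ∫ x, g x * G x := by
    intro g
    set η : 𝓢(ℝ, ℂ) := 𝓕⁻ g with hη
    have h1 : 𝓕 (deriv η) = fun x : ℝ => (2 * π * Complex.I * x) • g x := by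
      have hi : Integrable (deriv η) := by
        exact (SchwartzMap.derivCLM ℂ ℂ η).integrable (μ := volume)
      rw [Real.fourier_deriv η.integrable η.differentiable hi, ← SchwartzMap.fourier_coe, hη,
        FourierTransform.fourier_fourierInv_eq]
    have h2 : ∫ w, 𝓕 (deriv η) w • f w = ∫ w, deriv η w • 𝓕 f w := by
      have hi : Integrable (deriv η) := by
        exact (SchwartzMap.derivCLM ℂ ℂ η).integrable (μ := volume)
      simpa using! (VectorFourier.integral_fourierIntegral_smul_eq_flip (L := innerₗ ℝ)
        Real.continuous_fourierChar continuous_inner hi hf)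
    have h3 : ∫ w, η w * D w = ∫ x, g x * G x := by
      have := congrArg (fun T : 𝓢'(ℝ, ℂ) => T g)
        (Lp.fourierInv_toTemperedDistribution_eq (hD2.toLp D))
      simp only [TemperedDistribution.fourierInv_apply, Lp.toTemperedDistribution_apply] at this
      rw [← hη, ← hG] at this
      simp only [smul_eq_mul] at this
      rw [← this]
      refine integral_congr_ae ?_
      filter_upwards [hD2.coeFn_toLp] with x hx
      rw [hx]
    rw [← h3, ← integral_deriv_mul_schwartz hΦ hM hD hD2 η]
    simp only [smul_eq_mul] at h2
    rw [← h2, h1]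
    congr 1; ext x; simp; ring
  have hG2 : MemLp G 2 := Lp.memLp G
  have hae : ∀ᵐ x : ℝ, (2 * π * Complex.I * x) * f x = - G x := by
    refine ae_eq_of_integral_contDiff_smul_eq ?_ ?_ ?_
    · have : LocallyIntegrable f := hf.locallyIntegrable
      refine (locallyIntegrableOn_univ.1 ?_)
      exact (locallyIntegrableOn_univ.2 this).continuousOn_mul (by fun_prop) isOpen_univ.isLocallyClosed
    · exact (hG2.locallyIntegrable (by norm_num)).neg
    · intro g hg hgs
      have hs : HasCompactSupport (fun x => (g x : ℂ)) := hgs.comp_left (g := fun r : ℝ => (r : ℂ)) (by simp)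
      have hd : ContDiff ℝ ∞ (fun x => (g x : ℂ)) := Complex.ofRealCLM.contDiff.comp hg
      have := key (hs.toSchwartzMap hd)
      simp only [Complex.real_smul, mul_neg, integral_neg]
      exact this
  refine (hG2.const_mul (-(2 * π * Complex.I)⁻¹)).ae_eq ?_
  filter_upwards [hae] with x hx
  have hpi : (2 * π * Complex.I : ℂ) ≠ 0 := by simp [Real.pi_ne_zero]
  have : G x = -((2 * π * Complex.I * x) * f x) := by rw [hx]; simp
  rw [this]; field_simp


lemma memLp_rpow_mul_exp {a α s : ℝ} (ha : 0 < a) (hα : 0 < α) (hs : -1 < 2 * s) :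
    MemLp (fun w : ℝ => |w| ^ s * exp (-(a * |w| ^ α))) 2 := by
  have hm : Measurable (fun w : ℝ => |w| ^ s * exp (-(a * |w| ^ α))) := by fun_prop
  -- The function is even, so the half-line `w > 0` suffices.
  rw [memLp_two_iff_integrable_sq hm.aestronglyMeasurable]
  have h0 : IntegrableOn (fun w : ℝ => (|w| ^ s * exp (-(a * |w| ^ α))) ^ 2) (Set.Ioi 0) := by
    refine (integrableOn_rpow_mul_exp_neg_mul_rpow (p := α) (s := 2 * s) (b := 2 * a) hs hα
      (by positivity)).congr_fun (fun w hw => ?_) measurableSet_Ioi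
    have hw' : (0:ℝ) < w := hw
    simp only [abs_of_pos hw']
    rw [mul_pow, ← rpow_natCast, ← rpow_mul hw'.le, ← Real.exp_nat_mul]
    congr 2 <;> push_cast <;> ring
  rw [← integrableOn_univ, ← Set.Iic_union_Ioi (a := (0:ℝ)), integrableOn_union]
  refine ⟨?_, h0⟩
  rw [integrableOn_Iic_iff_integrableOn_Iio]
  have h1 := IntegrableOn.comp_neg_Iio (c := (0:ℝ)) (by simpa using h0)
  simpa using h1

/-- The derivative of `e^{-2πiνw} e^{-a|w|^α}` off `0`. The factor `|w| ^ 0 = 1` gives both summands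
the shape `|w| ^ s * e^{-a|w|^α}` of `memLp_rpow_mul_exp`. -/
lemma hasDerivAt_stable {a α ν : ℝ} (w : ℝ) (hw : w ≠ 0) :
    HasDerivAt (fun w : ℝ => Complex.exp (-(2 * π * Complex.I * ν) * w) *
        ((exp (-(a * |w| ^ α)) : ℝ) : ℂ))
      (Complex.exp (-(2 * π * Complex.I * ν) * w) *
        (((-(a * α) * (SignType.sign w : ℝ)) * (|w| ^ (α - 1) * exp (-(a * |w| ^ α))) : ℝ)
          - 2 * π * Complex.I * ν * ((|w| ^ (0:ℝ) * exp (-(a * |w| ^ α)) : ℝ) : ℂ))) w := by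
  have h1 : HasDerivAt (fun w : ℝ => exp (-(a * |w| ^ α)))
      ((-(a * α) * (SignType.sign w : ℝ)) * (|w| ^ (α - 1) * exp (-(a * |w| ^ α)))) w := by
    have := ((((hasDerivAt_abs hw).rpow_const (p := α) (Or.inl (abs_ne_zero.2 hw))).const_mul a).neg).exp
    convert! this using 1
    simp only [Pi.neg_apply]
    ring
  have h2 : HasDerivAt (fun w : ℝ => Complex.exp (-(2 * π * Complex.I * ν) * w))
      (Complex.exp (-(2 * π * Complex.I * ν) * w) * (-(2 * π * Complex.I * ν) * 1)) w :=
    ((Complex.ofRealCLM.hasDerivAt).const_mul (-(2 * π * Complex.I * ν))).cexp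
  convert! h2.mul h1.ofReal_comp using 1
  simp only [rpow_zero, one_mul]
  ring

/-- The hypothesis on the characteristic function at `u = -2πw`, in Mathlib's normalization of the
Fourier transform. -/
lemma fourier_stable (α c ν : ℝ) (hc : 0 < c)
    (f : ℝ → ℝ)
    (hchar : ∀ u : ℝ,
      (∫ x : ℝ, (f x : ℂ) * Complex.exp (Complex.I * u * x)) =
        Complex.exp (Complex.I * ν * u - ((|c * u| ^ α : ℝ) : ℂ))) :
    𝓕 (fun x => (f x : ℂ)) = fun w : ℝ => Complex.exp (-(2 * π * Complex.I * ν) * w) *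
        ((exp (-((2 * π * c) ^ α * |w| ^ α)) : ℝ) : ℂ) := by
  ext w
  rw [Real.fourier_real_eq_integral_exp_smul]
  have := hchar (-(2 * π * w))
  have e : |c * (-(2 * π * w))| ^ α = (2 * π * c) ^ α * |w| ^ α := by
    rw [← mul_rpow (by positivity) (abs_nonneg _)]
    congr 1
    rw [mul_neg, abs_neg, show c * (2 * π * w) = (2 * π * c) * w by ring, abs_mul,
      abs_of_pos (by positivity)]
  rw [e] at this
  convert! this using 1
  · congr 1; ext x
    rw [smul_eq_mul, mul_comm]
    congr 2
    push_cast; ring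
  · rw [Complex.ofReal_exp, ← Complex.exp_add]
    congr 1
    push_cast; ring

lemma memLp_stable {α c ν : ℝ} (hα : 1 / 2 < α) (hc : 0 < c)
    {f : ℝ → ℝ} (hint : Integrable f)
    (hchar : ∀ u : ℝ,
      (∫ x : ℝ, (f x : ℂ) * Complex.exp (Complex.I * u * x)) =
        Complex.exp (Complex.I * ν * u - ((|c * u| ^ α : ℝ) : ℂ))) :
    MemLp (fun x => x * f x) 2 := by
  have ha : 0 < (2 * π * c) ^ α := by positivity
  have hα0 : 0 < α := by linarith
  have m1 := memLp_rpow_mul_exp (s := α - 1) ha hα0 (by linarith)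
  have m2 := memLp_rpow_mul_exp (s := 0) ha hα0 (by norm_num)
  have hsign : Measurable (fun w : ℝ => ((SignType.sign w : SignType) : ℝ)) :=
    by
    have e : (fun w : ℝ => ((SignType.sign w : SignType) : ℝ)) =
        fun w => if 0 < w then 1 else if w < 0 then -1 else 0 := by
      ext w
      rw [sign_apply]
      split_ifs <;> simp
    rw [e]
    exact Measurable.ite measurableSet_Ioi measurable_const
      (Measurable.ite measurableSet_Iio measurable_const measurable_const)
  have m3 : MemLp (fun w : ℝ => (-((2 * π * c) ^ α * α) * (SignType.sign w : ℝ)) *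
      (|w| ^ (α - 1) * exp (-((2 * π * c) ^ α * |w| ^ α)))) 2 := by
    refine m1.of_le_mul (c := (2 * π * c) ^ α * α) ?_ (Eventually.of_forall fun w => ?_)
    · exact ((measurable_const.mul hsign).aestronglyMeasurable).mul m1.1
    · rw [norm_mul]
      gcongr
      have : |((SignType.sign w : SignType) : ℝ)| ≤ 1 := by
        cases SignType.sign w <;> simp
      rw [norm_mul, norm_neg, Real.norm_of_nonneg (by positivity), Real.norm_eq_abs]
      exact mul_le_of_le_one_right (by positivity) this
  have m4 := m3.ofReal (K := ℂ) |>.sub ((m2.ofReal (K := ℂ)).const_mul (2 * π * Complex.I * ν))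
  have hd := hasDerivAt_stable (a := (2 * π * c) ^ α) (α := α) (ν := ν)
  rw [← fourier_stable α c ν hc f hchar] at hd
  have m5 := memLp_mul_id hint.ofReal hd (by
    refine m4.of_le ?_ (Eventually.of_forall fun w => ?_)
    · refine AEStronglyMeasurable.mul (Continuous.aestronglyMeasurable (by fun_prop)) m4.1
    · rw [norm_mul]
      have : ‖Complex.exp (-(2 * π * Complex.I * ν) * w)‖ = 1 := by
        rw [Complex.norm_exp]; simp
      rw [this, one_mul]
      rfl)
  convert! m5.re using 1
  ext x; simp

/-! ### A weighted Bessel inequality for cosines -/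

/-- The cosine polynomial of degree less than `N` with coefficients `a`. The constant term is `a 0`,
without the factor `1 / 2` of the usual Fourier convention. -/
noncomputable def cosPoly (N : ℕ) (a : ℕ → ℝ) (θ : ℝ) : ℝ :=
  ∑ k ∈ Finset.range N, a k * Real.cos (k * θ)

lemma integral_cos_int_mul (n : ℤ) (hn : n ≠ 0) : ∫ θ in (0:ℝ)..2 * π, Real.cos (n * θ) = 0 := by
  rw [intervalIntegral.integral_comp_mul_left (fun x => Real.cos x) (by exact_mod_cast hn)]
  rw [integral_cos]
  have : Real.sin (n * (2 * π)) = 0 := by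
    have := Real.sin_int_mul_pi (n * 2)
    push_cast at this
    rw [← this]; ring_nf
  simp [this]

lemma integral_cos_mul_cos_s5 (k m : ℕ) (h : k ≠ m) :
    ∫ θ in (0:ℝ)..2 * π, Real.cos (k * θ) * Real.cos (m * θ) = 0 := by
  have e : ∀ θ : ℝ, Real.cos (k * θ) * Real.cos (m * θ) =
      (Real.cos (((k:ℤ) - m : ℤ) * θ) + Real.cos (((k:ℤ) + m : ℤ) * θ)) / 2 := by
    intro θ
    push_cast
    rw [sub_mul, add_mul, Real.cos_sub, Real.cos_add]; ring
  simp_rw [e]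
  rw [intervalIntegral.integral_div, intervalIntegral.integral_add
    (Continuous.intervalIntegrable (by fun_prop) _ _)
    (Continuous.intervalIntegrable (by fun_prop) _ _),
    integral_cos_int_mul _ (by omega), integral_cos_int_mul _ (by omega)]
  simp

/-- An inequality only, with the constant `2π` that the `k = 0` term needs. -/
lemma integral_cosPoly_sq_le (N : ℕ) (a : ℕ → ℝ) :
    ∫ θ in (0:ℝ)..2 * π, cosPoly N a θ ^ 2 ≤ 2 * π * ∑ k ∈ Finset.range N, a k ^ 2 := by
  have e : ∀ θ, cosPoly N a θ ^ 2 = ∑ k ∈ Finset.range N, ∑ m ∈ Finset.range N,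
      (a k * a m) * (Real.cos (k * θ) * Real.cos (m * θ)) := by
    intro θ
    rw [cosPoly, sq, Finset.sum_mul_sum]
    refine Finset.sum_congr rfl fun k _ => Finset.sum_congr rfl fun m _ => by ring
  simp_rw [e]
  rw [intervalIntegral.integral_finsetSum
    (fun k _ => Continuous.intervalIntegrable (by fun_prop) _ _), Finset.mul_sum]
  refine Finset.sum_le_sum fun k hk => ?_
  rw [intervalIntegral.integral_finsetSum
    (fun k _ => Continuous.intervalIntegrable (by fun_prop) _ _)]
  rw [Finset.sum_eq_single k]
  · rw [intervalIntegral.integral_const_mul]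
    have : ∫ θ in (0:ℝ)..2 * π, Real.cos (k * θ) * Real.cos (k * θ) ≤ ∫ θ in (0:ℝ)..2 * π, (1:ℝ) := by
      refine intervalIntegral.integral_mono_on (by positivity)
        (Continuous.intervalIntegrable (by fun_prop) _ _) (by simp) (fun θ _ => ?_)
      rw [← sq]; exact Real.cos_sq_le_one _
    simp only [intervalIntegral.integral_const, sub_zero, smul_eq_mul, mul_one] at this
    nlinarith [mul_self_nonneg (a k)]
  · intro m _ hm
    rw [intervalIntegral.integral_const_mul, integral_cos_mul_cos_s5 k m hm.symm, mul_zero]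
  · intro h; exact absurd hk h

lemma cosPoly_continuous (N : ℕ) (a : ℕ → ℝ) : Continuous (cosPoly N a) := by
  unfold cosPoly; fun_prop

lemma cosPoly_periodic (N : ℕ) (a : ℕ → ℝ) : Function.Periodic (cosPoly N a) (2 * π) := by
  intro θ
  unfold cosPoly
  refine Finset.sum_congr rfl fun k _ => ?_
  rw [mul_add, Real.cos_add_nat_mul_two_pi]

/-- The integral of a squared cosine polynomial over a period, after rescaling to period `4 L`. The
reflected case `s = -1` serves the left tail `x < -L`. -/
lemma integral_cosPoly_scaled (N : ℕ) (a : ℕ → ℝ) {L : ℝ} (hL : 0 < L) (s : ℝ)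
    (hs : s = 1 ∨ s = -1) (t : ℝ) :
    ∫ x in t..t + 4 * L, cosPoly N a (π / (2 * L) * (s * x + L)) ^ 2 ≤
      4 * L * ∑ k ∈ Finset.range N, a k ^ 2 := by
  have hπ := Real.pi_pos
  have hper : Function.Periodic (fun x => cosPoly N a x ^ 2) (2 * π) := fun x => by
    simp only [cosPoly_periodic N a x]
  have h0 := integral_cosPoly_sq_le N a
  have e : ∀ x, π / (2 * L) * (s * x + L) = (π / (2 * L) * s) * x + π / 2 := by
    intro x; field_simp
  simp_rw [e]
  have hs0 : s ≠ 0 := by rcases hs with rfl | rfl <;> norm_num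
  rw [intervalIntegral.integral_comp_mul_add (fun x => cosPoly N a x ^ 2) (by positivity)]
  set A := π / (2 * L) * s * t + π / 2 with hA
  have hk : 4 * L * ∑ k ∈ Finset.range N, a k ^ 2 = (π / (2 * L))⁻¹ * (2 * π * ∑ k ∈ Finset.range N, a k ^ 2) := by
    field_simp; ring
  rw [hk]
  have hp : ∀ A, ∫ x in A..A + 2 * π, cosPoly N a x ^ 2 ≤ 2 * π * ∑ k ∈ Finset.range N, a k ^ 2 := by
    intro A
    rw [hper.intervalIntegral_add_eq A 0, zero_add]; exact h0
  rcases hs with rfl | rfl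
  · have e2 : π / (2 * L) * 1 * (t + 4 * L) + π / 2 = A + 2 * π := by
      rw [hA]; field_simp; ring
    rw [e2, mul_one, smul_eq_mul]
    gcongr
    exact hp A
  · have e2 : A = (π / (2 * L) * (-1) * (t + 4 * L) + π / 2) + 2 * π := by
      rw [hA]; field_simp; ring
    rw [intervalIntegral.integral_symm, e2, smul_eq_mul, mul_neg_one, inv_neg, neg_mul_neg]
    gcongr
    exact hp _

/-- The hypothesis `hS` bounds the integrals of `g` over intervals of length `4 L`; the half-line
`x > L` is covered by such intervals, the `n`-th of which lies in `x ≥ (n + 1) L`. -/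
lemma lintegral_tail_periodic {g : ℝ → ℝ} (hg : Continuous g) (h0 : ∀ x, 0 ≤ g x) {L : ℝ} (hL : 0 < L) {S : ℝ}
    (hS : ∀ t, ∫ x in t..t + 4 * L, g x ≤ S) :
    ∫⁻ x in Set.Ioi L, ENNReal.ofReal (g x / x ^ 2) ≤
      ENNReal.ofReal (S / L ^ 2 * ∑' n : ℕ, 1 / ((n : ℝ) + 1) ^ 2) := by
  have hS0 : 0 ≤ S := (intervalIntegral.integral_nonneg (by linarith) (fun x _ => h0 x)).trans (hS 0)
  have hsum : Summable (fun n : ℕ => 1 / ((n : ℝ) + 1) ^ 2) := by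
    simpa using (summable_nat_add_iff 1).2 (Real.summable_one_div_nat_pow (p := 2).2 one_lt_two)
  have hsub : Set.Ioi L ⊆ ⋃ n : ℕ, Set.Ioc (L + n * (4 * L)) (L + n * (4 * L) + 4 * L) := by
    intro x hx
    have hx' : L < x := hx
    obtain ⟨n, hn⟩ := existsUnique_add_zsmul_mem_Ioc (show 0 < 4 * L by positivity) x L |>.exists
    have hn0 : n ≤ 0 := by
      by_contra h
      have : (1:ℝ) ≤ n := by exact_mod_cast (by omega : (1:ℤ) ≤ n)
      have := hn.2
      simp only [zsmul_eq_mul] at this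
      nlinarith
    obtain ⟨m, rfl⟩ := Int.exists_eq_neg_ofNat hn0
    refine Set.mem_iUnion.2 ⟨m, ?_⟩
    simp only [zsmul_eq_mul, Set.mem_Ioc, Int.cast_neg, Int.cast_natCast] at hn ⊢
    constructor <;> linarith [hn.1, hn.2]
  calc ∫⁻ x in Set.Ioi L, ENNReal.ofReal (g x / x ^ 2)
      ≤ ∫⁻ x in ⋃ n : ℕ, Set.Ioc (L + n * (4 * L)) (L + n * (4 * L) + 4 * L),
          ENNReal.ofReal (g x / x ^ 2) := lintegral_mono_set hsub
    _ ≤ ∑' n : ℕ, ∫⁻ x in Set.Ioc (L + n * (4 * L)) (L + n * (4 * L) + 4 * L),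
          ENNReal.ofReal (g x / x ^ 2) := lintegral_iUnion_le _ _
    _ ≤ ∑' n : ℕ, ENNReal.ofReal (S / L ^ 2 * (1 / ((n : ℝ) + 1) ^ 2)) := by
        refine ENNReal.tsum_le_tsum fun n => ?_
        set t := L + n * (4 * L) with ht
        have hn : (0:ℝ) ≤ n := Nat.cast_nonneg n
        have htL : L * (n + 1) ≤ t := by rw [ht]; nlinarith
        have hI : IntegrableOn g (Set.Ioc t (t + 4 * L)) := hg.integrableOn_Ioc
        calc ∫⁻ x in Set.Ioc t (t + 4 * L), ENNReal.ofReal (g x / x ^ 2)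
            ≤ ∫⁻ x in Set.Ioc t (t + 4 * L), ENNReal.ofReal (g x / (L * (n + 1)) ^ 2) := by
              refine setLIntegral_mono' measurableSet_Ioc fun x hx => ?_
              have := hx.1
              have := h0 x
              gcongr
              linarith
          _ = ENNReal.ofReal (∫ x in Set.Ioc t (t + 4 * L), g x / (L * (n + 1)) ^ 2) := by
              rw [ofReal_integral_eq_lintegral_ofReal (hI.div_const _)
                (Eventually.of_forall fun x => div_nonneg (h0 x) (by positivity))]
          _ ≤ _ := by
              refine ENNReal.ofReal_le_ofReal ?_
              rw [integral_div, ← intervalIntegral.integral_of_le (by linarith)]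
              rw [div_mul_div_comm, mul_one, mul_pow]
              gcongr
              exact hS t
    _ = _ := by
        rw [← ENNReal.ofReal_tsum_of_nonneg (fun n => by positivity) (hsum.mul_left _), tsum_mul_left]

/-- The two tails `x > L` and `x < -L` of `T(x)² / x²`, for the cosine polynomial
`T(x) = cosPoly N a (π (x + L) / (2 L))` of period `4 L`. -/
lemma lintegral_compl_Icc_periodic {N : ℕ} (a : ℕ → ℝ) {L : ℝ} (hL : 0 < L) :
    ∫⁻ x in (Set.Icc (-L) L)ᶜ,
        ENNReal.ofReal (cosPoly N a (π / (2 * L) * (x + L)) ^ 2 / x ^ 2) ≤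
      ENNReal.ofReal (8 / L * (∑' n : ℕ, 1 / ((n : ℝ) + 1) ^ 2) *
        ∑ k ∈ Finset.range N, a k ^ 2) := by
  have hc := cosPoly_continuous N a
  have key : ∀ s : ℝ, s = 1 ∨ s = -1 → ∫⁻ x in Set.Ioi L,
      ENNReal.ofReal (cosPoly N a (π / (2 * L) * (s * x + L)) ^ 2 / x ^ 2) ≤
      ENNReal.ofReal (4 / L * (∑' n : ℕ, 1 / ((n : ℝ) + 1) ^ 2) *
        ∑ k ∈ Finset.range N, a k ^ 2) := by
    intro s hs
    refine (lintegral_tail_periodic (by fun_prop) (fun x => sq_nonneg _) hL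
      (integral_cosPoly_scaled N a hL s hs)).trans (le_of_eq ?_)
    congr 1
    field_simp
  have hset : (Set.Icc (-L) L)ᶜ = Set.Iio (-L) ∪ Set.Ioi L := by
    ext x
    simp only [Set.mem_compl_iff, Set.mem_Icc, not_and_or, not_le, Set.mem_union, Set.mem_Iio,
      Set.mem_Ioi]
  rw [hset]
  refine (lintegral_union_le _ _ _).trans ?_
  have h1 := key 1 (Or.inl rfl)
  have h2 := key (-1) (Or.inr rfl)
  have h3 : ∫⁻ x in Set.Iio (-L),
        ENNReal.ofReal (cosPoly N a (π / (2 * L) * (x + L)) ^ 2 / x ^ 2) =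
      ∫⁻ x in Set.Ioi L,
        ENNReal.ofReal (cosPoly N a (π / (2 * L) * (-1 * x + L)) ^ 2 / x ^ 2) := by
    have := (Measure.measurePreserving_neg (volume : Measure ℝ)).setLIntegral_comp_preimage_emb
      (MeasurableEquiv.neg ℝ).measurableEmbedding
      (fun x => ENNReal.ofReal (cosPoly N a (π / (2 * L) * (x + L)) ^ 2 / x ^ 2)) (Set.Iio (-L))
    rw [← this]
    simp
  rw [h3]
  simp only [one_mul] at h1
  refine (add_le_add h2 h1).trans (le_of_eq ?_)
  rw [← ENNReal.ofReal_add (by positivity) (by positivity)]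
  congr 1
  ring

/-- Bessel's inequality by duality. If `S` is the sum on the left and `T` the cosine polynomial
whose coefficients are these integrals, then `S = ∫ f T` over `|x| > L`; Cauchy–Schwarz for
`f T = (x f) (T / x)` and the bound of the weighted norm of `T` by `√S` conclude. -/
lemma sum_sq_le {f : ℝ → ℝ} (hf : Integrable f) (h2 : MemLp (fun x => x * f x) 2) {L : ℝ}
    (hL : 0 < L) (N : ℕ) :
    ∑ k ∈ Finset.range N,
        (∫ x in (Set.Icc (-L) L)ᶜ, f x * Real.cos (k * π * (x + L) / (2 * L))) ^ 2 ≤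
      (∫ x, (x * f x) ^ 2) * (8 / L * ∑' n : ℕ, 1 / ((n : ℝ) + 1) ^ 2) := by
  set s := (Set.Icc (-L) L)ᶜ with hs
  set a : ℕ → ℝ := fun k => ∫ x in s, f x * Real.cos (k * π * (x + L) / (2 * L)) with ha
  set S := ∑ k ∈ Finset.range N, a k ^ 2 with hS
  set T : ℝ → ℝ := fun x => cosPoly N a (π / (2 * L) * (x + L)) with hT
  set K := ∑' n : ℕ, 1 / ((n : ℝ) + 1) ^ 2 with hK
  have hTc : Continuous T := (cosPoly_continuous N a).comp (by fun_prop)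
  have hS0 : 0 ≤ S := Finset.sum_nonneg fun k _ => sq_nonneg _
  have hsm : MeasurableSet s := measurableSet_Icc.compl
  have hST : S = ∫ x in s, f x * T x := by
    have e : ∀ x, f x * T x = ∑ k ∈ Finset.range N,
        a k * (f x * Real.cos (k * π * (x + L) / (2 * L))) := by
      intro x
      simp only [hT, cosPoly, Finset.mul_sum]
      refine Finset.sum_congr rfl fun k _ => ?_
      rw [show (k:ℝ) * (π / (2 * L) * (x + L)) = k * π * (x + L) / (2 * L) by ring]
      ring
    simp_rw [e]
    rw [integral_finsetSum]
    · refine Finset.sum_congr rfl fun k _ => ?_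
      rw [integral_const_mul, sq]
    · intro k _
      refine Integrable.const_mul ?_ _
      refine Integrable.mul_bdd (c := 1) hf.integrableOn
        (Continuous.aestronglyMeasurable (by fun_prop))
        (Eventually.of_forall fun x => Real.abs_cos_le_one _)
  have hI2 : Integrable (fun x => (x * f x) ^ 2) := h2.integrable_sq
  set M := ∫ x, (x * f x) ^ 2 with hM
  have hM0 : 0 ≤ M := integral_nonneg fun x => sq_nonneg _
  have hB := lintegral_compl_Icc_periodic (N := N) a hL
  have h1 : ENNReal.ofReal S ≤ ENNReal.ofReal M ^ (1 / 2 : ℝ) *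
      ENNReal.ofReal (8 / L * K * S) ^ (1 / 2 : ℝ) := by
    calc ENNReal.ofReal S ≤ ‖∫ x in s, f x * T x‖ₑ := by
          rw [← hST, Real.enorm_of_nonneg hS0]
      _ ≤ ∫⁻ x in s, ‖f x * T x‖ₑ := enorm_integral_le_lintegral_enorm _
      _ = ∫⁻ x in s, ((fun x => ‖x * f x‖ₑ) * (fun x => ‖T x / x‖ₑ)) x := by
          refine setLIntegral_congr_fun hsm fun x hx => ?_
          have hx0 : x ≠ 0 := by
            rintro rfl
            exact hx ⟨by linarith, by linarith⟩
          simp only [Pi.mul_apply]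
          rw [← enorm_mul]
          congr 1
          field_simp
      _ ≤ (∫⁻ x in s, ‖x * f x‖ₑ ^ (2:ℝ)) ^ (1 / 2 : ℝ) *
            (∫⁻ x in s, ‖T x / x‖ₑ ^ (2:ℝ)) ^ (1 / 2 : ℝ) := by
          refine ENNReal.lintegral_mul_le_Lp_mul_Lq _ Real.HolderConjugate.two_two ?_ ?_
          · exact h2.1.enorm.restrict
          · exact (hTc.measurable.div measurable_id).enorm.aemeasurable
      _ ≤ _ := by
          have e : ∀ r : ℝ, ‖r‖ₑ ^ (2:ℝ) = ENNReal.ofReal (r ^ 2) := by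
            intro r
            rw [← sq_abs, ENNReal.ofReal_pow (abs_nonneg _), ← Real.enorm_eq_ofReal_abs]
            exact ENNReal.rpow_natCast _ 2
          simp only [e]
          gcongr
          · rw [hM, ofReal_integral_eq_lintegral_ofReal hI2
              (Eventually.of_forall fun x => sq_nonneg _)]
            exact setLIntegral_le_lintegral _ _
          · simp only [div_pow]
            exact hB
  have hK0 : 0 ≤ K := tsum_nonneg fun n => by positivity
  -- Squaring turns the bound into `S ^ 2 ≤ M * (8 * K / L) * S`, and a factor `S` cancels.
  rw [ENNReal.ofReal_rpow_of_nonneg hM0 (by norm_num),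
    ENNReal.ofReal_rpow_of_nonneg (by positivity) (by norm_num),
    ← ENNReal.ofReal_mul (by positivity), ENNReal.ofReal_le_ofReal_iff (by positivity),
    ← Real.sqrt_eq_rpow, ← Real.sqrt_eq_rpow, ← Real.sqrt_mul hM0] at h1
  have h3 : S ^ 2 ≤ M * (8 / L * K * S) := (Real.le_sqrt hS0 (by positivity)).1 h1
  rcases hS0.eq_or_lt with h | h
  · rw [← h]; positivity
  · refine le_of_mul_le_mul_right ?_ h
    linarith

theorem stmt_5 (α c μ : ℝ) (hα : α ∈ Set.Ioc (1 / 2 : ℝ) 2) (hc : 0 < c)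
    (f : ℝ → ℝ)
    (hnonneg : ∀ x, 0 ≤ f x) (hint : Integrable f) (hone : ∫ x, f x = 1)
    (hchar : ∀ u : ℝ,
      (∫ x : ℝ, (f x : ℂ) * Complex.exp (Complex.I * u * x)) =
        Complex.exp (Complex.I * μ * u - ((|c * u| ^ α : ℝ) : ℂ))) :
    COSAdmissible f := by
  have h2 := memLp_stable hα.1 hc hint hchar
  set M := ∫ x, (x * f x) ^ 2 with hM
  set K := ∑' n : ℕ, 1 / ((n : ℝ) + 1) ^ 2 with hK
  have hlim : Tendsto (fun L : ℝ => (8 * M * K) / L ^ 2) atTop (nhds 0) :=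
    tendsto_const_nhds.div_atTop (tendsto_pow_atTop two_ne_zero)
  refine squeeze_zero' ?_ ?_ hlim
  · filter_upwards [eventually_gt_atTop 0] with L hL
    exact tsum_nonneg fun k => by positivity
  · filter_upwards [eventually_gt_atTop 0] with L hL
    refine Real.tsum_le_of_sum_range_le (fun k => by positivity) fun N => ?_
    rw [← Finset.mul_sum]
    simp only [sq_abs]
    calc _ ≤ 1 / L * (M * (8 / L * K)) := by
          gcongr
          exact sum_sq_le hint h2 hL N
      _ = _ := by field_simp
end
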